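/- Let F : E → ℝ be (γ,μ)-strongly quasar convex with respect to its minimizer x* for some γ ∈ (0,1] and 0 < μ ≤ L, and assume F is (ρ,L)-curvatured for some L > 0 and ρ ≤ L. Let 0 < s ≤ 1/L and let (x_n, y_n, z_n) be generated by Algorithm 1 (Nesterov accelerated gradient, 3-points form) with z₀ = x₀ and constant parameters α = 1/(1 + √(μs)), β = 1 − γ√(μs), η = √(s/μ). If ρ ≥ −γ√(μ/s), then for all n ∈ ℕ, F(x_n) − F(x*) ≤ (2/γ)(1 − γ√(μs))ⁿ (F(x₀) − F(x*)). -/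

import Mathlib

open scoped RealInnerProductSpace

/-- A function `ψ` with `γ ψ ≤ t (dψ/dt)` and `-C t² ≤ ψ` on `(0, ∞)`, for some `γ ≤ 1`,
is nonnegative at `1`. -/
theorem nonneg_at_one_of_mul_le_mul_deriv {ψ ψ' : ℝ → ℝ} {γ C : ℝ} (hγ : γ ≤ 1) (hC : 0 ≤ C)
    (hψ : ∀ t, HasDerivAt ψ (ψ' t) t) (hode : ∀ t, 0 < t → γ * ψ t ≤ t * ψ' t)
    (hlow : ∀ t, 0 < t → -(C * t ^ 2) ≤ ψ t) : 0 ≤ ψ 1 := by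
  have hderiv : ∀ t : ℝ, 0 < t → HasDerivAt (fun t => t ^ (-γ) * ψ t)
      (-γ * t ^ (-γ - 1) * ψ t + t ^ (-γ) * ψ' t) t := fun t ht =>
    (Real.hasDerivAt_rpow_const (Or.inl ht.ne')).mul (hψ t)
  have hmono : MonotoneOn (fun t : ℝ => t ^ (-γ) * ψ t) (Set.Ioi 0) := by
    refine monotoneOn_of_deriv_nonneg (convex_Ioi 0)
      (fun t ht => (hderiv t ht).continuousAt.continuousWithinAt)
      (fun t ht => (hderiv t (by simpa using ht)).differentiableAt.differentiableWithinAt) ?_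
    intro t ht
    have ht : 0 < t := by simpa using ht
    have hpow : t ^ (-γ) = t ^ (-γ - 1) * t := by
      rw [Real.rpow_sub_one ht.ne']
      field_simp
    rw [(hderiv t ht).deriv, hpow]
    have := mul_nonneg (Real.rpow_nonneg ht.le (-γ - 1)) (sub_nonneg.2 (hode t ht))
    linarith
  have hbound : ∀ t : ℝ, 0 < t → t ≤ 1 → -(C * t) ≤ ψ 1 := by
    intro t ht ht1
    have h1 : t ^ (-γ) * ψ t ≤ ψ 1 := by
      simpa using hmono (Set.mem_Ioi.2 ht) (Set.mem_Ioi.2 one_pos) ht1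
    have h2 : t ^ (-γ) ≤ t⁻¹ := by
      rw [← Real.rpow_neg_one]
      exact Real.rpow_le_rpow_of_exponent_ge ht ht1 (by linarith)
    have h3 := mul_le_mul_of_nonneg_left (hlow t ht) (Real.rpow_nonneg ht.le (-γ))
    have h4 := mul_le_mul_of_nonneg_right h2 (by positivity : 0 ≤ C * t ^ 2)
    have h5 : t⁻¹ * (C * t ^ 2) = C * t := by field_simp
    linarith
  by_contra! hneg
  have hden : 0 < C + 1 - ψ 1 := by linarith
  have h := hbound (-ψ 1 / (C + 1 - ψ 1)) (div_pos (by linarith) hden)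
    ((div_le_one hden).2 (by linarith))
  rw [← mul_div_assoc, ← neg_div, div_le_iff₀ hden] at h
  nlinarith

section

variable {E : Type*} [NormedAddCommGroup E] [InnerProductSpace ℝ E]

/-- Quadratic growth of strongly quasar convex functions. -/
theorem quadratic_growth_of_strongly_quasar_convex [CompleteSpace E]
    {F : E → ℝ} (hF : Differentiable ℝ F) {μ γ : ℝ} (hμ : 0 < μ) (hγ0 : 0 < γ) (hγ1 : γ ≤ 1)
    {xstar : E} (hmin : ∀ x : E, F xstar ≤ F x)
    (hqc : ∀ x : E,
      F xstar ≥ F x + (1 / γ) * ⟪gradient F x, xstar - x⟫ + μ / 2 * ‖xstar - x‖ ^ 2) (x : E) :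
    γ * μ / (2 * (2 - γ)) * ‖x - xstar‖ ^ 2 ≤ F x - F xstar := by
  set d := x - xstar with hd
  have hγ2 : 0 < 2 - γ := by linarith
  set C := γ * μ / (2 * (2 - γ)) * ‖d‖ ^ 2 with hCdef
  have hC : 0 ≤ C := by positivity
  have hCeq : (2 - γ) * C = γ * μ / 2 * ‖d‖ ^ 2 := by
    rw [hCdef]
    field_simp
  have hline : ∀ t : ℝ, HasDerivAt (fun t : ℝ => xstar + t • d) d t := fun t => by
    simpa using ((hasDerivAt_id t).smul_const d).const_add xstar
  have hderiv : ∀ t : ℝ, HasDerivAt (fun t : ℝ => F (xstar + t • d) - F xstar - C * t ^ 2)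
      (⟪gradient F (xstar + t • d), d⟫ - C * (2 * t)) t := fun t => by
    have h := (hF (xstar + t • d)).hasGradientAt.hasFDerivAt.comp_hasDerivAt t (hline t)
    have h' := (h.sub_const (F xstar)).sub (((hasDerivAt_id t).pow 2).const_mul C)
    refine h'.congr_deriv ?_
    simp
  have key := nonneg_at_one_of_mul_le_mul_deriv hγ1 hC hderiv (fun t _ => by
    have h := hqc (xstar + t • d)
    rw [show xstar - (xstar + t • d) = -(t • d) by abel, inner_neg_right, norm_neg,
      inner_smul_right, norm_smul, mul_pow, Real.norm_eq_abs, sq_abs] at h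
    have h' := mul_le_mul_of_nonneg_left h hγ0.le
    have e : γ * (1 / γ * -(t * ⟪gradient F (xstar + t • d), d⟫))
        = -(t * ⟪gradient F (xstar + t • d), d⟫) := by field_simp
    rw [mul_add, mul_add, e] at h'
    linear_combination h' + t ^ 2 * hCeq) (fun t _ => by
    linarith [hmin (xstar + t • d)])
  rw [one_smul, hd, add_sub_cancel] at key
  linarith

/-- One-step decrease of the Lyapunov function `F x - F x* + μ / 2 * ‖z - x*‖²`
along Nesterov's iteration, where `q = √(μ s)`. -/
theorem nesterov_lyapunov_step [CompleteSpace E] {F : E → ℝ} {L μ γ ρ s q : ℝ}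
    (hμ : 0 < μ) (hγ0 : 0 < γ) (hq : 0 < q) (hγq : γ * q ≤ 1) (hq2 : q ^ 2 = μ * s)
    (hs : 0 < s) (hLs : L * s ≤ 1) (hρ : -(γ * μ) ≤ ρ * q) {xstar : E}
    (hqc : ∀ x : E,
      F xstar ≥ F x + (1 / γ) * ⟪gradient F x, xstar - x⟫ + μ / 2 * ‖xstar - x‖ ^ 2)
    (hcurv : ∀ x y : E,
      F x + ⟪gradient F x, y - x⟫ + ρ / 2 * ‖x - y‖ ^ 2 ≤ F y ∧
      F y ≤ F x + ⟪gradient F x, y - x⟫ + L / 2 * ‖x - y‖ ^ 2)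
    {x y z : E} (hxy : y - x = q • (z - y)) :
    F (y - s • gradient F y) - F xstar
        + μ / 2 * ‖(1 - γ * q) • z + (γ * q) • y - (q / μ) • gradient F y - xstar‖ ^ 2
      ≤ (1 - γ * q) * (F x - F xstar + μ / 2 * ‖z - xstar‖ ^ 2) := by
  set g := gradient F y with hg
  obtain ⟨w, hw⟩ : ∃ w, w = y - xstar := ⟨_, rfl⟩
  obtain ⟨p, hp⟩ : ∃ p, p = z - y := ⟨_, rfl⟩
  have hdesc := (hcurv y (y - s • g)).2
  have hlow := (hcurv y x).1
  have hquasar := mul_le_mul_of_nonneg_left (hqc y) hγ0.le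
  rw [← hp] at hxy
  rw [← hg, show y - s • g - y = -(s • g) by abel, sub_sub_cancel, inner_neg_right,
    inner_smul_right, real_inner_self_eq_norm_sq, norm_smul, mul_pow, Real.norm_eq_abs,
    sq_abs] at hdesc
  rw [← hg, ← neg_sub y x, hxy, inner_neg_right, inner_smul_right, norm_smul, mul_pow,
    Real.norm_eq_abs, sq_abs] at hlow
  rw [← hg, ← neg_sub y xstar, ← hw, norm_neg, inner_neg_right, mul_add, mul_add,
    show γ * (1 / γ * -⟪g, w⟫) = -⟪g, w⟫ by field_simp] at hquasar
  have hznext : (1 - γ * q) • z + (γ * q) • y - (q / μ) • g - xstar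
      = w + (1 - γ * q) • p - (q / μ) • g := by
    rw [hw, hp]
    module
  have hzcur : z - xstar = w + p := by
    rw [hw, hp]
    abel
  rw [hznext, hzcur, norm_sub_sq_real, norm_add_sq_real, norm_add_sq_real]
  simp only [inner_add_left, inner_smul_left, inner_smul_right, norm_smul, mul_pow,
    Real.norm_eq_abs, sq_abs, RCLike.conj_to_real]
  rw [real_inner_comm g w, real_inner_comm g p]
  have hη : μ * (q / μ) = q := by field_simp
  have hη2 : μ * (q / μ) ^ 2 = s := by
    field_simp
    linarith
  have hdescent : 0 ≤ s * (1 - L * s) * ‖g‖ ^ 2 :=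
    mul_nonneg (mul_nonneg hs.le (by linarith)) (sq_nonneg _)
  have hcurvature : 0 ≤ (1 - γ * q) * (q * (γ * μ + ρ * q)) * ‖p‖ ^ 2 :=
    mul_nonneg (mul_nonneg (by linarith) (mul_nonneg hq.le (by linarith))) (sq_nonneg _)
  have hlow' := mul_le_mul_of_nonneg_left hlow (sub_nonneg.2 hγq)
  have hquasar' := mul_le_mul_of_nonneg_left hquasar hq.le
  linear_combination hdesc + hlow' + hquasar' + hdescent / 2 + hcurvature / 2
    + ‖g‖ ^ 2 / 2 * hη2 - (⟪g, w⟫ + (1 - γ * q) * ⟪g, p⟫) * hη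

end

/-- accelerated linear convergence of the Nesterov accelerated
gradient algorithm (3-points form) for `(γ,μ)`-strongly quasar convex,
`(ρ,L)`-curvatured functions, provided `ρ ≥ -γ√(μ/s)`. -/
theorem stmt_2 {E : Type*} [NormedAddCommGroup E] [InnerProductSpace ℝ E]
    [FiniteDimensional ℝ E]
    (F : E → ℝ) (hF : Differentiable ℝ F)
    (L μ γ ρ s : ℝ) (hL : 0 < L) (hμ : 0 < μ) (hμL : μ ≤ L)
    (hγ0 : 0 < γ) (hγ1 : γ ≤ 1) (hρL : ρ ≤ L)
    (xstar : E) (hmin : ∀ x : E, F xstar ≤ F x)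
    (hqc : ∀ x : E,
      F xstar ≥ F x + (1 / γ) * ⟪gradient F x, xstar - x⟫ + μ / 2 * ‖xstar - x‖ ^ 2)
    (hcurv : ∀ x y : E,
      F x + ⟪gradient F x, y - x⟫ + ρ / 2 * ‖x - y‖ ^ 2 ≤ F y ∧
      F y ≤ F x + ⟪gradient F x, y - x⟫ + L / 2 * ‖x - y‖ ^ 2)
    (hs0 : 0 < s) (hs1 : s ≤ 1 / L)
    (hρ : ρ ≥ -γ * Real.sqrt (μ / s))
    (x y z : ℕ → E) (hz0 : z 0 = x 0)
    (hy : ∀ n : ℕ, y n = (1 / (1 + Real.sqrt (μ * s))) • x n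
      + (1 - 1 / (1 + Real.sqrt (μ * s))) • z n)
    (hx : ∀ n : ℕ, x (n + 1) = y n - s • gradient F (y n))
    (hz : ∀ n : ℕ, z (n + 1) = (1 - γ * Real.sqrt (μ * s)) • z n
      + (γ * Real.sqrt (μ * s)) • y n - Real.sqrt (s / μ) • gradient F (y n)) :
    ∀ n : ℕ, F (x n) - F xstar
      ≤ 2 / γ * (1 - γ * Real.sqrt (μ * s)) ^ n * (F (x 0) - F xstar) := by
  have hq : 0 < √(μ * s) := Real.sqrt_pos.2 (mul_pos hμ hs0)
  have hLs : L * s ≤ 1 := by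
    rw [le_div_iff₀ hL] at hs1
    linarith
  have hq1 : √(μ * s) ≤ 1 :=
    Real.sqrt_le_one.2 ((mul_le_mul_of_nonneg_right hμL hs0.le).trans hLs)
  have hq2 : √(μ * s) ^ 2 = μ * s := Real.sq_sqrt (mul_pos hμ hs0).le
  have hsq1 : √(μ / s) * √(μ * s) = μ := by
    rw [← Real.sqrt_mul (div_pos hμ hs0).le, show μ / s * (μ * s) = μ ^ 2 by field_simp,
      Real.sqrt_sq hμ.le]
  have hsq2 : √(s / μ) = √(μ * s) / μ := by
    rw [eq_div_iff hμ.ne']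
    nth_rewrite 2 [← Real.sqrt_sq hμ.le]
    rw [← Real.sqrt_mul (div_pos hs0 hμ).le]
    congr 1
    field_simp
  have hρ' : -(γ * μ) ≤ ρ * √(μ * s) := by
    have h := mul_le_mul_of_nonneg_right hρ hq.le
    rwa [mul_assoc, hsq1, neg_mul] at h
  rw [hsq2] at hz
  clear hρ hsq1 hsq2
  generalize √(μ * s) = q at *
  have hγq : γ * q ≤ 1 := mul_le_one₀ hγ1 hq.le hq1
  have hstep : ∀ n, F (x (n + 1)) - F xstar + μ / 2 * ‖z (n + 1) - xstar‖ ^ 2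
      ≤ (1 - γ * q) * (F (x n) - F xstar + μ / 2 * ‖z n - xstar‖ ^ 2) := by
    intro n
    rw [hx, hz]
    refine nesterov_lyapunov_step hμ hγ0 hq hγq hq2 hs0 hLs hρ' hqc hcurv ?_
    have hq' : 1 + q ≠ 0 := by positivity
    rw [hy]
    match_scalars <;> field_simp <;> ring
  have hlyap : ∀ n, F (x n) - F xstar + μ / 2 * ‖z n - xstar‖ ^ 2
      ≤ (1 - γ * q) ^ n * (F (x 0) - F xstar + μ / 2 * ‖z 0 - xstar‖ ^ 2) := by
    intro n
    induction n with
    | zero => simp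
    | succ n ih =>
      calc _ ≤ _ := hstep n
        _ ≤ _ := mul_le_mul_of_nonneg_left ih (sub_nonneg.2 hγq)
        _ = _ := by ring
  have hinit : F (x 0) - F xstar + μ / 2 * ‖z 0 - xstar‖ ^ 2
      ≤ 2 / γ * (F (x 0) - F xstar) := by
    have hγ2 : 0 < 2 - γ := by linarith
    have h := mul_le_mul_of_nonneg_left
      (quadratic_growth_of_strongly_quasar_convex hF hμ hγ0 hγ1 hmin hqc (x 0))
      (div_pos hγ2 hγ0).le
    have e₁ : (2 - γ) / γ * (γ * μ / (2 * (2 - γ)) * ‖x 0 - xstar‖ ^ 2)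
        = μ / 2 * ‖x 0 - xstar‖ ^ 2 := by field_simp
    have e₂ : (2 - γ) / γ = 2 / γ - 1 := by field_simp
    rw [e₁, e₂] at h
    rw [hz0]
    linarith
  intro n
  calc F (x n) - F xstar
      ≤ F (x n) - F xstar + μ / 2 * ‖z n - xstar‖ ^ 2 := le_add_of_nonneg_right (by positivity)
    _ ≤ _ := hlyap n
    _ ≤ (1 - γ * q) ^ n * (2 / γ * (F (x 0) - F xstar)) :=
      mul_le_mul_of_nonneg_left hinit (pow_nonneg (sub_nonneg.2 hγq) n)
    _ = _ := by ring
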